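/- (Day–Nordlander type inequality.) Let X be a real normed space of dimension at least 2 and let τ > 0. Then √(1 + τ²) − 1 ≤ ρ_X(τ); equivalently, there exist unit vectors x, y ∈ X with (‖x + τy‖ + ‖x − τy‖)/2 − 1 ≥ √(1 + τ²) − 1. -/

import Mathlib

/-!
By duality the inequality becomes a statement about the plane `F` dual to a two-dimensional
subspace of `X`: if `K` bounds `‖x + τy‖ + ‖x − τy‖` over unit vectors `x`, `y`, then
`‖f + g‖ + τ‖f − g‖ ≤ K` for all `f`, `g` in the unit ball of `F` (`dual_bound`). So it is enough
to find, for `ε = 2τ / √(1 + τ²)`, unit vectors `u`, `v` of `F` with `‖v − u‖ = ε` and `‖v + u‖`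
not below `√(4 − ε²)`; this is Nordlander's theorem (`StrictNorm.four_le`), proved for strictly
convex norms and transferred by adding a small multiple of a Euclidean norm
(`strictNorm_add`, `two_mul_sqrt_le`).

Nordlander's theorem is an area argument. Let `u` run counterclockwise through the unit circle of
a strictly convex norm on `ℂ` and let `v` be the endpoint of the chord of length `ε` that starts
at `u`. Then `v` is a continuous, strictly increasing function of `u`
(`StrictNorm.exists_partner`). The signed area swept by a curve is a quadratic form in the curve, so
`area(v − u) + area(v + u) = 2 area(u) + 2 area(v)`. Over half a turn `u` and `v` sweep the same
area `A`, `v − u` sweeps `ε² A`, and, if `‖v + u‖ ≤ c` throughout, `v + u` sweeps at most `c² A`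
because its direction is monotone: a convex quadrilateral has positively oriented diagonals
(`StrictNorm.diagonals`). Hence `4 ≤ ε² + c²`.

The curves need not be differentiable, so the area comparison is infinitesimal: up to `κ |t − s|`
the cross product of the points of the unit circle at angles `s` and `t` is the increment of
`sectorArea` (`StrictNorm.cross_sub_sectorArea`). The resulting local inequalities are
integrated by `le_of_locally_le`, and finally `κ → 0`.
-/

/-- The modulus of smoothness (Lindenstrauss modulus) of a real normed space `X`:
`ρ_X(τ) = sup { (‖x + τy‖ + ‖x − τy‖)/2 − 1 : ‖x‖ = ‖y‖ ≤ 1 }`. -/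
noncomputable def modSmooth (X : Type*) [NormedAddCommGroup X] [NormedSpace ℝ X] (τ : ℝ) : ℝ :=
  sSup {r : ℝ | ∃ x y : X, ‖x‖ = ‖y‖ ∧ ‖y‖ ≤ 1 ∧
    r = (‖x + τ • y‖ + ‖x - τ • y‖) / 2 - 1}

open Set Filter Topology

/-! ### Norms on the plane in polar coordinates -/

/-- The standard area form on `ℂ`. -/
def cross (a b : ℂ) : ℝ := a.re * b.im - a.im * b.re

/-- `N` is a strictly convex norm on the real vector space `ℂ`. Strict convexity is expressed by the
strict triangle inequality for linearly independent vectors. -/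
structure StrictNorm (N : ℂ → ℝ) : Prop where
  cont : Continuous N
  pos : ∀ z, z ≠ 0 → 0 < N z
  smul : ∀ (t : ℝ) (z : ℂ), N (t • z) = |t| * N z
  add_le : ∀ a b, N (a + b) ≤ N a + N b
  add_lt : ∀ a b, cross a b ≠ 0 → N (a + b) < N a + N b

/-- The point of the Euclidean unit circle at angle `t`. -/
noncomputable def cis (t : ℝ) : ℂ := Complex.exp (t * Complex.I)

/-- The point at angle `t` of the unit circle of `N`. -/
noncomputable def pt (N : ℂ → ℝ) (t : ℝ) : ℂ := (N (cis t))⁻¹ • cis t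

/-- Twice the signed area of the sector of the unit ball of `N` between the angles `0` and `t`. -/
noncomputable def sectorArea (N : ℂ → ℝ) (t : ℝ) : ℝ := ∫ s in (0 : ℝ)..t, (N (cis s))⁻¹ ^ 2

/-- The polar angle of `w` in the branch `(θ - π, θ + π]`. -/
noncomputable def angleFrom (θ : ℝ) (w : ℂ) : ℝ := θ + Complex.arg (w * cis (-θ))

lemma cis_re (t : ℝ) : (cis t).re = Real.cos t := Complex.exp_ofReal_mul_I_re t
lemma cis_im (t : ℝ) : (cis t).im = Real.sin t := Complex.exp_ofReal_mul_I_im t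
lemma cis_ne (t : ℝ) : cis t ≠ 0 := Complex.exp_ne_zero _
lemma cis_add (s t : ℝ) : cis (s + t) = cis s * cis t := by
  simp only [cis]; rw [← Complex.exp_add]; push_cast; ring_nf
lemma cis_add_pi (t : ℝ) : cis (t + Real.pi) = -cis t := by
  apply Complex.ext <;> simp [cis_re, cis_im]
lemma continuous_cis : Continuous cis := by unfold cis; fun_prop

lemma cross_cis (s t : ℝ) : cross (cis s) (cis t) = Real.sin (t - s) := by
  simp only [cross, cis_re, cis_im, Real.sin_sub]; ring

lemma cross_smul (p q : ℝ) (a b : ℂ) : cross (p • a) (q • b) = p * q * cross a b := by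
  simp [cross]; ring

namespace StrictNorm
variable {N : ℂ → ℝ} (hN : StrictNorm N)
include hN

lemma neg (z : ℂ) : N (-z) = N z := by
  have := hN.smul (-1) z
  simpa using this

lemma sub_comm (a b : ℂ) : N (a - b) = N (b - a) := by
  rw [← hN.neg, neg_sub]

lemma cis_pos (t : ℝ) : 0 < N (cis t) := hN.pos _ (cis_ne t)

lemma nonneg (z : ℂ) : 0 ≤ N z := by
  by_cases h : z = 0
  · have := hN.smul 0 z
    simp [h] at this
    simp [h, this]
  · exact (hN.pos z h).le

lemma pt_norm (t : ℝ) : N (pt N t) = 1 := by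
  have := hN.cis_pos t
  rw [pt, hN.smul, abs_of_pos (inv_pos.2 this)]
  field_simp

lemma pt_add_pi (t : ℝ) : pt N (t + Real.pi) = -pt N t := by
  simp only [pt, cis_add_pi, hN.neg, smul_neg]

lemma continuous_rad : Continuous fun t => (N (cis t))⁻¹ :=
  (hN.cont.comp continuous_cis).inv₀ fun t => (hN.cis_pos t).ne'

lemma continuous_pt : Continuous (pt N) := hN.continuous_rad.smul continuous_cis

omit hN in
lemma cross_pt (s t : ℝ) :
    cross (pt N s) (pt N t) = (N (cis s))⁻¹ * (N (cis t))⁻¹ * Real.sin (t - s) := by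
  rw [pt, pt, cross_smul, cross_cis]

lemma cross_pt_nonneg {s t : ℝ} (h : s ≤ t) (h' : t ≤ s + Real.pi) :
    0 ≤ cross (pt N s) (pt N t) := by
  rw [cross_pt]
  have := hN.cis_pos s
  have := hN.cis_pos t
  have := Real.sin_nonneg_of_nonneg_of_le_pi (x := t - s) (by linarith) (by linarith)
  positivity

lemma cross_pt_pos {s t : ℝ} (h : s < t) (h' : t < s + Real.pi) :
    0 < cross (pt N s) (pt N t) := by
  rw [cross_pt]
  have := hN.cis_pos s
  have := hN.cis_pos t
  have := Real.sin_pos_of_pos_of_lt_pi (x := t - s) (by linarith) (by linarith)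
  positivity

/-- The unit ball is convex: three points of its boundary taken counterclockwise within half a turn
form a positively oriented triangle. -/
lemma triangle {α β γ : ℝ} (h1 : α ≤ β) (h2 : β ≤ γ) (h3 : γ ≤ α + Real.pi) :
    cross (pt N α) (pt N γ) ≤ cross (pt N α) (pt N β) + cross (pt N β) (pt N γ) := by
  have hA := hN.cross_pt_nonneg h2 (by linarith)
  have hB := hN.cross_pt_nonneg (h1.trans h2) h3
  have hC := hN.cross_pt_nonneg h1 (by linarith)
  have key : cross (pt N α) (pt N γ) • pt N β
      = cross (pt N β) (pt N γ) • pt N α + cross (pt N α) (pt N β) • pt N γ := by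
    apply Complex.ext <;> simp [cross] <;> ring
  have := hN.add_le (cross (pt N β) (pt N γ) • pt N α) (cross (pt N α) (pt N β) • pt N γ)
  rw [← key, hN.smul, hN.smul, hN.smul, hN.pt_norm, hN.pt_norm, hN.pt_norm, abs_of_nonneg hA,
    abs_of_nonneg hB, abs_of_nonneg hC] at this
  linarith

/-- The diagonals of a counterclockwise quadrilateral inscribed in the unit circle are positively
oriented; their cross product is twice its area. -/
lemma diagonals {α β γ δ : ℝ} (h1 : α ≤ β) (h2 : β ≤ γ) (h3 : γ ≤ δ) (h4 : δ ≤ α + Real.pi) :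
    0 ≤ cross (pt N γ - pt N α) (pt N δ - pt N β) := by
  have t1 := hN.triangle h1 h2 (by linarith)
  have t2 := hN.triangle (h1.trans h2) h3 h4
  have : cross (pt N γ - pt N α) (pt N δ - pt N β)
      = (cross (pt N α) (pt N β) + cross (pt N β) (pt N γ) - cross (pt N α) (pt N γ))
        + (cross (pt N α) (pt N γ) + cross (pt N γ) (pt N δ) - cross (pt N α) (pt N δ)) := by
    simp [cross]; ring
  linarith

/-- If the unit vector `b` lies in the open sector spanned by the unit vectors `a` and `c`, the chord
from `a` to `b` is shorter than the one from `a` to `c`. -/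
lemma chord_lt_aux {a b c : ℂ} {p q : ℝ} (hb : N b = 1) (ha : N a = 1) (hc : N c = 1)
    (hp : 0 < p) (hq : 0 < q) (hpq : b = p • a + q • c) (h : cross a c ≠ 0) :
    N (b - a) < N (c - a) := by
  have h1 : 1 ≤ p + q := by
    have := hN.add_le (p • a) (q • c)
    rw [← hpq, hN.smul, hN.smul, ha, hb, hc, abs_of_pos hp, abs_of_pos hq] at this
    linarith
  have h2 : p + q < 1 + p * N (c - a) := by
    have e : (p + q) • c = b + p • (c - a) := by
      rw [hpq, smul_sub, add_smul]; abel
    have := hN.add_lt b (p • (c - a)) (by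
      have : cross b (p • (c - a)) = p * (p + q) * cross a c := by
        rw [hpq]; simp [cross]; ring
      rw [this]; positivity)
    rw [← e, hN.smul, hN.smul, hb, hc, abs_of_pos hp, abs_of_pos (by linarith)] at this
    linarith
  have h3 : (p + q) * N (b - a) ≤ (p + q - 1) + q * N (c - a) := by
    have e : (p + q) • (b - a) = (p + q - 1) • b + q • (c - a) := by
      have : (p + q - 1) • b = (p + q) • b - (p • a + q • c) := by
        rw [← hpq, sub_smul, one_smul]
      rw [this, smul_sub, smul_sub, add_smul p q a]; abel
    have := hN.add_le ((p + q - 1) • b) (q • (c - a))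
    rw [← e, hN.smul, hN.smul, hN.smul, hb, abs_of_pos hq, abs_of_pos (by linarith : 0 < p + q),
      abs_of_nonneg (by linarith)] at this
    linarith
  nlinarith

lemma pt_comb {α β γ : ℝ} (h1 : α < β) (h2 : β < γ) (h3 : γ < α + Real.pi) :
    ∃ p q : ℝ, 0 < p ∧ 0 < q ∧ pt N β = p • pt N α + q • pt N γ := by
  have hA := hN.cross_pt_pos h2 (by linarith)
  have hB := hN.cross_pt_pos (h1.trans h2) h3
  have hC := hN.cross_pt_pos h1 (by linarith)
  refine ⟨_, _, div_pos hA hB, div_pos hC hB, ?_⟩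
  have hB' := hB.ne'
  apply Complex.ext <;> simp <;> field_simp <;> simp [cross] <;> ring

lemma chord_lt {α β γ : ℝ} (h1 : α < β) (h2 : β < γ) (h3 : γ < α + Real.pi) :
    N (pt N β - pt N α) < N (pt N γ - pt N α) ∧ N (pt N γ - pt N β) < N (pt N γ - pt N α) := by
  obtain ⟨p, q, hp, hq, h⟩ := hN.pt_comb h1 h2 h3
  have hB := hN.cross_pt_pos (h1.trans h2) h3
  refine ⟨hN.chord_lt_aux (hN.pt_norm _) (hN.pt_norm _) (hN.pt_norm _) hp hq h hB.ne', ?_⟩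
  rw [hN.sub_comm (pt N γ), hN.sub_comm (pt N γ) (pt N α)]
  refine hN.chord_lt_aux (hN.pt_norm _) (hN.pt_norm _) (hN.pt_norm _) hq hp (h.trans (add_comm _ _))
    ?_
  have : cross (pt N γ) (pt N α) = - cross (pt N α) (pt N γ) := by simp [cross]; ring
  rw [this]; exact neg_ne_zero.2 hB.ne'

/-! ### Chords of a fixed length -/

lemma eq_of_chord_eq {α β γ : ℝ} (h1 : α < β) (h2 : β < α + Real.pi) (h3 : α < γ)
    (h4 : γ < α + Real.pi) (h : N (pt N β - pt N α) = N (pt N γ - pt N α)) : β = γ := by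
  rcases lt_trichotomy β γ with h' | h' | h'
  · exact absurd h (hN.chord_lt h1 h' h4).1.ne
  · exact h'
  · exact absurd h (hN.chord_lt h3 h' h2).1.ne'

/-- From each point start chords of every length in `(0, 2)`, counterclockwise (`σ = 1`) as well as
clockwise (`σ = -1`). -/
lemma exists_chord {ε : ℝ} (h0 : 0 < ε) (h2 : ε < 2) (θ : ℝ) {σ : ℝ} (hσ : σ = 1 ∨ σ = -1) :
    ∃ β, 0 < β ∧ β < Real.pi ∧ N (pt N (θ + σ * β) - pt N θ) = ε := by
  have hc : Continuous fun β => N (pt N (θ + σ * β) - pt N θ) := by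
    have := hN.continuous_pt
    have := hN.cont
    fun_prop
  have e0 : N (pt N (θ + σ * 0) - pt N θ) = 0 := by
    have := hN.smul 0 0
    simpa using this
  have e1 : N (pt N (θ + σ * Real.pi) - pt N θ) = 2 := by
    have hh : pt N (θ + σ * Real.pi) = - pt N θ := by
      rcases hσ with rfl | rfl
      · rw [one_mul, hN.pt_add_pi]
      · rw [← neg_neg (pt N (θ + -1 * Real.pi)), ← hN.pt_add_pi]; simp
    have := hN.smul (-2) (pt N θ)
    rw [hN.pt_norm] at this
    rw [hh]
    convert this using 2
    · apply Complex.ext <;> simp <;> ring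
    · norm_num
  have := intermediate_value_Ioo Real.pi_pos.le hc.continuousOn
  simp only [e0, e1] at this
  obtain ⟨β, hβ, h⟩ := this ⟨h0, h2⟩
  exact ⟨β, hβ.1, hβ.2, h⟩

/-- The endpoint of the counterclockwise chord of length `ε` depends continuously and increasingly
on its starting point, in terms of lifted angles. -/
lemma exists_partner {ε : ℝ} (h0 : 0 < ε) (h2 : ε < 2) :
    ∃ ψ : ℝ → ℝ, Continuous ψ ∧ StrictMono ψ ∧ (∀ θ, ψ (θ + Real.pi) = ψ θ + Real.pi) ∧
      ∀ θ, θ < ψ θ ∧ ψ θ < θ + Real.pi ∧ N (pt N (ψ θ) - pt N θ) = ε := by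
  choose β hβ0 hβπ hβ using fun θ => hN.exists_chord h0 h2 θ (Or.inl rfl)
  have hψ : ∀ θ, θ < θ + 1 * β θ ∧ θ + 1 * β θ < θ + Real.pi ∧
      N (pt N (θ + 1 * β θ) - pt N θ) = ε := fun θ =>
    ⟨by linarith [hβ0 θ], by linarith [hβπ θ], hβ θ⟩
  generalize hd : (fun θ => θ + 1 * β θ) = ψ
  have hd' : ∀ θ, θ + 1 * β θ = ψ θ := fun θ => congrFun hd θ
  simp only [hd'] at hψ
  have hmono : StrictMono ψ := by
    intro θ θ' h
    by_contra! hcon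
    have a := (hN.chord_lt h (hψ θ').1 (hcon.trans_lt (hψ θ).2.1)).2
    have b : N (pt N (ψ θ') - pt N θ) ≤ N (pt N (ψ θ) - pt N θ) := by
      rcases hcon.eq_or_lt with e | e
      · rw [e]
      · exact (hN.chord_lt (h.trans (hψ θ').1) e (hψ θ).2.1).1.le
    rw [(hψ θ).2.2] at b
    rw [(hψ θ').2.2] at a
    linarith
  have hsurj : Function.Surjective ψ := by
    intro s
    obtain ⟨b, hb0, hbπ, hb⟩ := hN.exists_chord h0 h2 s (Or.inr rfl)
    refine ⟨s + -1 * b, ?_⟩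
    have := hψ (s + -1 * b)
    refine hN.eq_of_chord_eq this.1 this.2.1 (by linarith) (by linarith) ?_
    rw [this.2.2, hN.sub_comm, hb]
  refine ⟨ψ, hmono.monotone.continuous_of_surjective hsurj, hmono, fun θ => ?_, hψ⟩
  have a := hψ (θ + Real.pi)
  have b := hψ θ
  refine hN.eq_of_chord_eq a.1 a.2.1 (by linarith) (by linarith) ?_
  rw [a.2.2, hN.pt_add_pi, hN.pt_add_pi, ← hN.neg, ← b.2.2]
  congr 1; abel

/-! ### Areas swept by curves -/

lemma hasDerivAt_sectorArea (t : ℝ) :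
    HasDerivAt (sectorArea N) ((N (cis t))⁻¹ ^ 2) t := by
  have hc : Continuous fun s => (N (cis s))⁻¹ ^ 2 := hN.continuous_rad.pow 2
  exact intervalIntegral.integral_hasDerivAt_right (hc.intervalIntegrable _ _)
    hc.stronglyMeasurable.stronglyMeasurableAtFilter hc.continuousAt

lemma sectorArea_add_pi (t : ℝ) :
    sectorArea N (t + Real.pi) = sectorArea N t + sectorArea N Real.pi := by
  have hc : Continuous fun s => (N (cis s))⁻¹ ^ 2 := hN.continuous_rad.pow 2
  have hp : Function.Periodic (fun s => (N (cis s))⁻¹ ^ 2) Real.pi := fun s => by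
    simp only [cis_add_pi, hN.neg]
  have := hp.intervalIntegral_add_eq t 0
  simp only [sectorArea]
  rw [zero_add] at this
  rw [← this, intervalIntegral.integral_add_adjacent_intervals] <;>
  exact hc.intervalIntegrable _ _

lemma sectorArea_pi_pos : 0 < sectorArea N Real.pi := by
  have hc : Continuous fun s => (N (cis s))⁻¹ ^ 2 := hN.continuous_rad.pow 2
  exact intervalIntegral.intervalIntegral_pos_of_pos (hc.intervalIntegrable _ _)
    (fun s => by have := hN.cis_pos s; positivity) Real.pi_pos

/-- An infinitesimal triangle with apex at the origin inscribed in the unit circle has the area of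
the sector containing it, to first order in the angle. -/
lemma cross_sub_sectorArea (s : ℝ) {κ : ℝ} (hκ : 0 < κ) :
    ∀ᶠ t in 𝓝 s, |cross (pt N s) (pt N t) - (sectorArea N t - sectorArea N s)| ≤ κ * |t - s| := by
  -- The radius is only continuous in `t`, but it multiplies `sin (t - s)`, which vanishes at `s`.
  have h1 : HasDerivAt (fun t => cross (pt N s) (pt N t)) ((N (cis s))⁻¹ ^ 2) s := by
    rw [hasDerivAt_iff_tendsto_slope]
    have hs : HasDerivAt (fun t => Real.sin (t - s)) 1 s := by
      have := ((hasDerivAt_id s).sub_const s).sin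
      simpa using this
    rw [hasDerivAt_iff_tendsto_slope] at hs
    have hr := (hN.continuous_rad.tendsto s).mono_left (nhdsWithin_le_nhds (s := {s}ᶜ))
    have := ((tendsto_const_nhds (x := (N (cis s))⁻¹)).mul hr).mul hs
    rw [mul_one, ← pow_two] at this
    refine this.congr fun t => ?_
    simp only [slope_def_field, cross_pt, sub_self, Real.sin_zero]
    ring
  have h2 := (h1.sub (hN.hasDerivAt_sectorArea s)).isLittleO
  have h3 := h2.def hκ
  filter_upwards [h3] with t ht
  have e : cross (pt N s) (pt N s) = 0 := by simp [cross]; ring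
  simp only [sub_self, smul_zero, sub_zero, Real.norm_eq_abs, Pi.sub_apply, e] at ht
  convert ht using 2
  ring

/-- `angleFrom θ w` is a polar angle of `w`, whatever `θ` is. -/
lemma angleFrom_spec (θ : ℝ) (w : ℂ) (hw : w ≠ 0) : w = N w • pt N (angleFrom θ w) := by
  have h : (‖w * cis (-θ)‖ : ℂ) * cis (w * cis (-θ)).arg = w * cis (-θ) :=
    Complex.norm_mul_exp_arg_mul_I _
  have h2 : w = ‖w * cis (-θ)‖ • cis (angleFrom θ w) := by
    rw [angleFrom, cis_add, Complex.real_smul]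
    have : cis (-θ) * cis θ = 1 := by rw [← cis_add]; simp [cis]
    calc w = w * (cis (-θ) * cis θ) := by rw [this, mul_one]
      _ = (w * cis (-θ)) * cis θ := by ring
      _ = ((‖w * cis (-θ)‖ : ℂ) * cis (w * cis (-θ)).arg) * cis θ := by rw [h]
      _ = _ := by ring
  have hpos : 0 < ‖w * cis (-θ)‖ := norm_pos_iff.2 (mul_ne_zero hw (cis_ne _))
  have h3 : N w = ‖w * cis (-θ)‖ * N (cis (angleFrom θ w)) := by
    conv_lhs => rw [h2]
    rw [hN.smul, abs_of_pos hpos]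
  have := hN.cis_pos (angleFrom θ w)
  rw [h3, pt, smul_smul, mul_assoc, mul_inv_cancel₀ this.ne', mul_one]
  exact h2

end StrictNorm

lemma continuous_angleFrom {w : ℝ → ℂ} (hw : Continuous w) (h : ∀ θ, 0 < cross (cis θ) (w θ)) :
    Continuous fun θ => angleFrom θ (w θ) := by
  refine continuous_id.add (continuous_iff_continuousAt.2 fun θ => ?_)
  refine ContinuousAt.comp (f := fun θ => w θ * cis (-θ)) (Complex.continuousAt_arg ?_)
    (hw.mul (continuous_cis.comp continuous_neg)).continuousAt
  right
  have := h θ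
  simp only [cross, cis_re, cis_im] at this
  simp [cis_re, cis_im]
  nlinarith

lemma angleFrom_add_pi (θ : ℝ) (w : ℂ) :
    angleFrom (θ + Real.pi) (-w) = angleFrom θ w + Real.pi := by
  have : cis (-(θ + Real.pi)) = - cis (-θ) := by
    have := cis_add_pi (-(θ + Real.pi))
    rw [← neg_eq_iff_eq_neg.2 this]; congr 2; ring
  simp only [angleFrom, this]; ring_nf

/-- A continuous function that locally does not decrease to the right of each point satisfies
`f a ≤ f b` for `a ≤ b`. -/
lemma le_of_locally_le {f : ℝ → ℝ} {a b : ℝ} (hab : a ≤ b) (hf : Continuous f)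
    (h : ∀ x, ∀ᶠ y in 𝓝[>] x, f x ≤ f y) : f a ≤ f b := by
  have hcl : IsClosed ({x | f a ≤ f x} ∩ Icc a b) :=
    (isClosed_le continuous_const hf).inter isClosed_Icc
  refine hcl.Icc_subset_of_forall_exists_gt (a := a) (b := b) (le_refl (f a)) ?_ ⟨hab, le_rfl⟩
  intro x hx y hy
  have h1 : ∀ᶠ z in 𝓝[>] x, z ∈ Ioc x y := Ioc_mem_nhdsGT hy
  obtain ⟨z, hz1, hz2⟩ := ((h x).and h1).exists
  exact ⟨z, le_trans hx.1 hz1, hz2⟩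

/-! ### Nordlander's theorem -/

namespace StrictNorm
variable {N : ℂ → ℝ} (hN : StrictNorm N)
include hN

/-- A small counterclockwise step from `w` to `w'` inside the ball of radius `c` sweeps at most `c ^ 2`
times the area swept on the unit circle, up to the error `κ`. -/
lemma cross_le_of_norm_le {w w' : ℂ} {θ θ' c κ : ℝ} (hw : w ≠ 0) (hw' : w' ≠ 0)
    (hc : N w ≤ c) (hc' : N w' ≤ c) (h0 : 0 ≤ cross w w')
    (hgap : |angleFrom θ' w' - angleFrom θ w| < Real.pi)
    (hest : |cross (pt N (angleFrom θ w)) (pt N (angleFrom θ' w'))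
      - (sectorArea N (angleFrom θ' w') - sectorArea N (angleFrom θ w))|
        ≤ κ * |angleFrom θ' w' - angleFrom θ w|) :
    cross w w' ≤ c ^ 2 * (sectorArea N (angleFrom θ' w') - sectorArea N (angleFrom θ w)
      + κ * (angleFrom θ' w' - angleFrom θ w)) := by
  have e := hN.angleFrom_spec θ w hw
  have e' := hN.angleFrom_spec θ' w' hw'
  generalize angleFrom θ w = μ at *
  generalize angleFrom θ' w' = μ' at *
  have p := hN.pos w hw
  have p' := hN.pos w' hw'
  have hcr : cross w w' = N w * N w' * cross (pt N μ) (pt N μ') := by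
    conv_lhs => rw [e, e', cross_smul]
  have hx : 0 ≤ cross (pt N μ) (pt N μ') := by
    by_contra! hcon
    have := mul_neg_of_pos_of_neg (mul_pos p p') hcon
    linarith
  have hle : μ ≤ μ' := by
    by_contra! hcon
    rw [abs_lt] at hgap
    have := hN.cross_pt_pos hcon (by linarith)
    have e : cross (pt N μ') (pt N μ) = - cross (pt N μ) (pt N μ') := by simp [cross]; ring
    linarith
  rw [abs_of_nonneg (by linarith : 0 ≤ μ' - μ)] at hest
  have h1 := (abs_le.1 hest).2
  rw [hcr]
  have h2 : N w * N w' ≤ c ^ 2 := by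
    rw [pow_two]; exact mul_le_mul hc hc' p'.le (p.le.trans hc)
  calc _ ≤ c ^ 2 * cross (pt N μ) (pt N μ') := mul_le_mul_of_nonneg_right h2 hx
    _ ≤ _ := mul_le_mul_of_nonneg_left (by linarith) (sq_nonneg c)

/-- If all midpoints of chords of length `ε` have norm at most `c / 2`, then `c` is not below its
Euclidean value `√(4 - ε ^ 2)`. -/
theorem four_le {ε c : ℝ} (h0 : 0 < ε) (h2 : ε < 2)
    (H : ∀ u v, N u = 1 → N v = 1 → N (v - u) = ε → N (v + u) ≤ c) : 4 ≤ ε ^ 2 + c ^ 2 := by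
  obtain ⟨ψ, hψc, hψm, hψπ, hψ⟩ := hN.exists_partner h0 h2
  have hptc := hN.continuous_pt
  set d : ℝ → ℂ := fun θ => pt N (ψ θ) - pt N θ with hd
  set m : ℝ → ℂ := fun θ => pt N (ψ θ) + pt N θ with hm
  have hdc : Continuous d := (hptc.comp hψc).sub hptc
  have hmc : Continuous m := (hptc.comp hψc).add hptc
  have hcv : ∀ θ, 0 < cross (cis θ) (pt N (ψ θ)) := fun θ => by
    have := hN.cis_pos (ψ θ)
    have e : cross (cis θ) (pt N (ψ θ)) = (N (cis (ψ θ)))⁻¹ * Real.sin (ψ θ - θ) := by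
      rw [pt, ← cross_cis, ← one_smul ℝ (cis θ), cross_smul]; simp
    rw [e]
    have := Real.sin_pos_of_pos_of_lt_pi (x := ψ θ - θ) (by linarith [(hψ θ).1])
      (by linarith [(hψ θ).2.1])
    positivity
  have hcu : ∀ θ, cross (cis θ) (pt N θ) = 0 := fun θ => by
    simp [pt, cross]; ring
  have hdp : ∀ θ, 0 < cross (cis θ) (d θ) := fun θ => by
    have : cross (cis θ) (d θ) = cross (cis θ) (pt N (ψ θ)) - cross (cis θ) (pt N θ) := by
      simp [hd, cross]; ring
    rw [this, hcu, sub_zero]; exact hcv θ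
  have hmp : ∀ θ, 0 < cross (cis θ) (m θ) := fun θ => by
    have : cross (cis θ) (m θ) = cross (cis θ) (pt N (ψ θ)) + cross (cis θ) (pt N θ) := by
      simp [hm, cross]; ring
    rw [this, hcu, add_zero]; exact hcv θ
  have hd0 : ∀ θ, d θ ≠ 0 := fun θ h => by have := hdp θ; simp [h, cross] at this
  have hm0 : ∀ θ, m θ ≠ 0 := fun θ h => by have := hmp θ; simp [h, cross] at this
  have hdN : ∀ θ, N (d θ) ≤ ε := fun θ => (hψ θ).2.2.le
  have hmN : ∀ θ, N (m θ) ≤ c := fun θ =>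
    H _ _ (hN.pt_norm _) (hN.pt_norm _) (hψ θ).2.2
  set δ : ℝ → ℝ := fun θ => angleFrom θ (d θ) with hδ
  set μ : ℝ → ℝ := fun θ => angleFrom θ (m θ) with hμ
  have hδc : Continuous δ := continuous_angleFrom hdc hdp
  have hμc : Continuous μ := continuous_angleFrom hmc hmp
  have hδπ : δ Real.pi = δ 0 + Real.pi := by
    have e : d Real.pi = - d 0 := by
      have a := hψπ 0
      have b := hN.pt_add_pi 0
      rw [zero_add] at a b
      simp only [hd, a, b, hN.pt_add_pi]; abel
    have := angleFrom_add_pi 0 (d 0)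
    rw [zero_add] at this
    simp only [hδ, e, this]
  have hμπ : μ Real.pi = μ 0 + Real.pi := by
    have e : m Real.pi = - m 0 := by
      have a := hψπ 0
      have b := hN.pt_add_pi 0
      rw [zero_add] at a b
      simp only [hm, a, b, hN.pt_add_pi]; abel
    have := angleFrom_add_pi 0 (m 0)
    rw [zero_add] at this
    simp only [hμ, e, this]
  have hac : Continuous (sectorArea N) :=
    continuous_iff_continuousAt.2 fun t => (hN.hasDerivAt_sectorArea t).continuousAt
  have key : ∀ κ > 0, 0 ≤ (ε ^ 2 + c ^ 2 - 4) * sectorArea N Real.pi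
      + κ * ((ε ^ 2 + c ^ 2 + 4) * Real.pi) := by
    intro κ hκ
    -- The area defect `ε² area(δ) + c² area(μ) - 2 area(θ) - 2 area(ψ)`, corrected by `κ` times the
    -- angles: the correction absorbs the first-order errors and makes `f` locally nondecreasing.
    set f : ℝ → ℝ := fun θ =>
      ε ^ 2 * (sectorArea N (δ θ) + κ * δ θ) + c ^ 2 * (sectorArea N (μ θ) + κ * μ θ)
        - 2 * (sectorArea N θ - κ * θ) - 2 * (sectorArea N (ψ θ) - κ * ψ θ) with hf
    have hfc : Continuous f := by fun_prop
    have hloc : ∀ x, ∀ᶠ y in 𝓝[>] x, f x ≤ f y := by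
      intro x
      have t1 := hN.cross_sub_sectorArea x hκ
      have t2 := (hψc.tendsto x).eventually (hN.cross_sub_sectorArea (ψ x) hκ)
      have t3 := (hδc.tendsto x).eventually (hN.cross_sub_sectorArea (δ x) hκ)
      have t4 := (hμc.tendsto x).eventually (hN.cross_sub_sectorArea (μ x) hκ)
      have t5 := (hδc.tendsto x).eventually (Metric.ball_mem_nhds (δ x) Real.pi_pos)
      have t6 := (hμc.tendsto x).eventually (Metric.ball_mem_nhds (μ x) Real.pi_pos)
      have t7 := (hψc.tendsto x).eventually (eventually_lt_nhds (hψ x).2.1)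
      have t8 := eventually_lt_nhds (hψ x).1
      filter_upwards [nhdsWithin_le_nhds t1, nhdsWithin_le_nhds t2, nhdsWithin_le_nhds t3,
        nhdsWithin_le_nhds t4, nhdsWithin_le_nhds t5, nhdsWithin_le_nhds t6,
        nhdsWithin_le_nhds t7, nhdsWithin_le_nhds t8, self_mem_nhdsWithin]
        with y s1 s2 s3 s4 s5 s6 s7 s8 hxy
      have hxy : x < y := hxy
      have hψxy := hψm hxy
      rw [Real.dist_eq] at s5 s6
      have cd : 0 ≤ cross (d x) (d y) := hN.diagonals hxy.le s8.le hψxy.le s7.le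
      have cm : 0 ≤ cross (m x) (m y) := by
        -- `v + u` is, up to sign, a diagonal of the quadrilateral `v, v', -u, -u'`.
        have := hN.diagonals hψxy.le s7.le (δ := y + Real.pi) (by linarith) (by linarith)
        rw [hN.pt_add_pi, hN.pt_add_pi] at this
        convert this using 1
        simp [hm, cross]; ring
      have bd := hN.cross_le_of_norm_le (hd0 x) (hd0 y) (hdN x) (hdN y) cd s5 s3
      have bm := hN.cross_le_of_norm_le (hm0 x) (hm0 y) (hmN x) (hmN y) cm s6 s4
      -- the parallelogram law for the area form
      have par : cross (d x) (d y) + cross (m x) (m y)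
          = 2 * cross (pt N x) (pt N y) + 2 * cross (pt N (ψ x)) (pt N (ψ y)) := by
        simp [hd, hm, cross]; ring
      rw [abs_of_pos (sub_pos.2 hxy)] at s1
      rw [abs_of_pos (sub_pos.2 hψxy)] at s2
      have l1 := (abs_le.1 s1).1
      have l2 := (abs_le.1 s2).1
      simp only [hf]
      simp only [hδ, hμ]
      linarith
    have := le_of_locally_le Real.pi_pos.le hfc hloc
    have hψπ0 := hψπ 0
    rw [zero_add] at hψπ0
    have a0 := hN.sectorArea_add_pi 0
    have z : sectorArea N 0 = 0 := by simp [sectorArea]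
    simp only [hf, hδπ, hμπ, hψπ0, hN.sectorArea_add_pi, z] at this
    linarith
  have hA := hN.sectorArea_pi_pos
  by_contra! hcon
  have hL : 0 < (ε ^ 2 + c ^ 2 + 4) * Real.pi := by have := Real.pi_pos; positivity
  have hneg : 0 < (4 - (ε ^ 2 + c ^ 2)) * sectorArea N Real.pi := mul_pos (by linarith) hA
  have := key ((4 - (ε ^ 2 + c ^ 2)) * sectorArea N Real.pi / (2 * ((ε ^ 2 + c ^ 2 + 4) * Real.pi)))
    (by positivity)
  have e : (4 - (ε ^ 2 + c ^ 2)) * sectorArea N Real.pi / (2 * ((ε ^ 2 + c ^ 2 + 4) * Real.pi))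
      * ((ε ^ 2 + c ^ 2 + 4) * Real.pi) = (4 - (ε ^ 2 + c ^ 2)) * sectorArea N Real.pi / 2 := by
    field_simp
  rw [e] at this
  linarith

end StrictNorm

/-! ### Duality and approximation -/

/-- Adding a positive multiple of the Euclidean norm to the seminorm `‖L z‖` makes it a strictly convex
norm. -/
lemma strictNorm_add {F : Type*} [NormedAddCommGroup F] [NormedSpace ℝ F] [FiniteDimensional ℝ F]
    (L : ℂ →ₗ[ℝ] F) {η : ℝ} (hη : 0 < η) : StrictNorm fun z => ‖L z‖ + η * ‖z‖ where
  cont := by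
    have := L.continuous_of_finiteDimensional
    fun_prop
  pos z hz := by
    have := norm_pos_iff.2 hz
    positivity
  smul t z := by
    rw [map_smul, norm_smul, norm_smul, Real.norm_eq_abs]; ring
  add_le a b := by
    rw [map_add]
    have := norm_add_le (L a) (L b)
    have := mul_le_mul_of_nonneg_left (norm_add_le a b) hη.le
    linarith
  add_lt a b h := by
    rw [map_add]
    have h1 := norm_add_le (L a) (L b)
    have h2 : ‖a + b‖ < ‖a‖ + ‖b‖ := by
      refine lt_of_le_of_ne (norm_add_le a b) fun e => h ?_
      have := (sameRay_iff_norm_add.2 e)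
      rcases this with rfl | rfl | ⟨p, q, hp, hq, e⟩
      · simp [cross]
      · simp [cross]
      · have e1 := cross_smul p q a b
        have e2 : cross (p • a) (q • b) = 0 := by rw [e]; simp [cross]; ring
        rw [e2] at e1
        have := mul_pos hp hq
        rcases mul_eq_zero.1 e1.symm with h | h
        · linarith
        · exact h
    have := mul_lt_mul_of_pos_left h2 hη
    linarith

/-- Since `f (x + τy) + g (x - τy) = (f + g) x + τ (f - g) y`, a bound for the modulus of smoothness
of `P` gives a bound for pairs in the dual unit ball. -/
lemma dual_bound {P : Type*} [NormedAddCommGroup P] [NormedSpace ℝ P] {τ K : ℝ} (hτ : 0 < τ)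
    (H : ∀ x y : P, ‖x‖ = 1 → ‖y‖ = 1 → ‖x + τ • y‖ + ‖x - τ • y‖ ≤ K) (e : P) (he : ‖e‖ = 1)
    (f g : StrongDual ℝ P) (hf : ‖f‖ ≤ 1) (hg : ‖g‖ ≤ 1) : ‖f + g‖ + τ * ‖f - g‖ ≤ K := by
  have h1 : ∀ x y : P, ‖x‖ = 1 → ‖y‖ = 1 → (f + g) x + τ * (f - g) y ≤ K := by
    intro x y hx hy
    have a : f (x + τ • y) ≤ ‖x + τ • y‖ := by
      have := f.le_of_opNorm_le hf (x + τ • y)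
      rw [one_mul] at this
      exact (le_abs_self _).trans this
    have b : g (x - τ • y) ≤ ‖x - τ • y‖ := by
      have := g.le_of_opNorm_le hg (x - τ • y)
      rw [one_mul] at this
      exact (le_abs_self _).trans this
    have := H x y hx hy
    simp at a b ⊢
    linarith
  have h2 : ∀ x y : P, ‖x‖ = 1 → ‖y‖ = 1 → |(f + g) x| + τ * |(f - g) y| ≤ K := by
    intro x y hx hy
    have a := h1 x y hx hy
    have b := h1 (-x) y (by rwa [norm_neg]) hy
    have c := h1 x (-y) hx (by rwa [norm_neg])
    have d := h1 (-x) (-y) (by rwa [norm_neg]) (by rwa [norm_neg])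
    rw [map_neg] at b c d
    rw [map_neg] at d
    rcases abs_cases ((f + g) x) with ⟨h, -⟩ | ⟨h, -⟩ <;>
    rcases abs_cases ((f - g) y) with ⟨h', -⟩ | ⟨h', -⟩ <;> rw [h, h'] <;> linarith
  have h3 : ∀ y : P, ‖y‖ = 1 → ‖f + g‖ ≤ K - τ * |(f - g) y| := by
    intro y hy
    refine ContinuousLinearMap.opNorm_le_of_unit_norm ?_ fun x hx => ?_
    · have := h2 e y he hy
      have := abs_nonneg ((f + g) e)
      linarith
    · have := h2 x y hx hy
      rw [Real.norm_eq_abs]; linarith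
  have h4 : ‖f - g‖ ≤ (K - ‖f + g‖) / τ := by
    refine ContinuousLinearMap.opNorm_le_of_unit_norm ?_ fun y hy => ?_
    · have := h3 e he
      have := abs_nonneg ((f - g) e)
      exact div_nonneg (by nlinarith) hτ.le
    · have := h3 y hy
      rw [Real.norm_eq_abs, le_div_iff₀ hτ]; linarith
  rw [le_div_iff₀ hτ] at h4
  linarith

/-- The dual form of the inequality, in a plane whose norm need not be strictly convex. -/
lemma two_mul_sqrt_le {F : Type*} [NormedAddCommGroup F] [NormedSpace ℝ F]
    (hF : Module.finrank ℝ F = 2) {τ K : ℝ} (hτ : 0 < τ)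
    (H : ∀ f g : F, ‖f‖ ≤ 1 → ‖g‖ ≤ 1 → ‖f + g‖ + τ * ‖f - g‖ ≤ K) :
    2 * Real.sqrt (1 + τ ^ 2) ≤ K := by
  have : FiniteDimensional ℝ F := Module.finite_of_finrank_pos (by omega)
  let L : ℂ ≃ₗ[ℝ] F := LinearEquiv.ofFinrankEq _ _ (by rw [hF, Complex.finrank_real_complex])
  let Linv := L.symm.toLinearMap.toContinuousLinearMap
  set C := ‖Linv‖ with hC
  have hC0 : 0 ≤ C := norm_nonneg _
  have hCz : ∀ z, ‖z‖ ≤ C * ‖L z‖ := fun z => by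
    have := Linv.le_opNorm (L z)
    simpa [Linv] using this
  have hK : 0 ≤ K := by
    have := H 0 0 (by simp) (by simp)
    simpa using this
  set s := Real.sqrt (1 + τ ^ 2) with hs
  have hs2 : s ^ 2 = 1 + τ ^ 2 := Real.sq_sqrt (by positivity)
  have hs0 : 0 < s := Real.sqrt_pos.2 (by positivity)
  have hτs : τ < s := by nlinarith
  have key : ∀ η > 0, 2 * s ≤ K + η * (C * K) := by
    intro η hη
    have hN := strictNorm_add L.toLinearMap hη
    -- `ε = 2τ / s` maximises `√(4 - ε²) + τ ε`, the maximum being `2s`.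
    have h4 := hN.four_le (ε := 2 * τ / s)
      (c := max ((1 + η * C) * K - τ * (2 * τ / s)) 0) (by positivity)
      (by rw [div_lt_iff₀ hs0]; linarith) (by
        intro u v hu hv huv
        refine le_trans ?_ (le_max_left _ _)
        simp only [LinearEquiv.coe_coe] at *
        have hu1 : ‖L u‖ ≤ 1 := by
          have : 0 ≤ η * ‖u‖ := by positivity
          linarith
        have hv1 : ‖L v‖ ≤ 1 := by
          have : 0 ≤ η * ‖v‖ := by positivity
          linarith
        have h := H _ _ hv1 hu1
        rw [← map_add, ← map_sub] at h
        rw [← huv]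
        have a := hCz (v + u)
        have b := hCz (v - u)
        have ht : 0 ≤ η * C := by positivity
        have := mul_le_mul_of_nonneg_left h ht
        have := mul_le_mul_of_nonneg_left a hη.le
        have := mul_le_mul_of_nonneg_left b (mul_pos hη hτ).le
        nlinarith)
    set c' := max ((1 + η * C) * K - τ * (2 * τ / s)) 0 with hc'
    have e : (2 * τ / s) ^ 2 = 4 - (2 / s) ^ 2 := by
      rw [div_pow, div_pow, hs2]; field_simp; ring
    have h5 : 2 / s ≤ c' := by
      refine le_of_sq_le_sq ?_ (le_max_right _ _)
      linarith
    have h6 : 2 / s ≤ (1 + η * C) * K - τ * (2 * τ / s) := by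
      rcases le_max_iff.1 h5 with h | h
      · exact h
      · have : 0 < 2 / s := by positivity
        linarith
    have h7 : 2 / s + τ * (2 * τ / s) = 2 * s := by
      field_simp; linarith
    linarith
  refine le_of_forall_pos_le_add fun t ht => ?_
  have hCK : 0 ≤ C * K := mul_nonneg hC0 hK
  have := key (t / (C * K + 1)) (by positivity)
  have h : t / (C * K + 1) * (C * K) ≤ t := by
    rw [div_mul_eq_mul_div, div_le_iff₀ (by positivity)]; nlinarith
  linarith


/-- Day–Nordlander type inequality: in every real normed space of dimension at least 2,
the modulus of smoothness is at least that of Hilbert space, `√(1 + τ²) − 1`. -/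
theorem day_nordlander {X : Type*} [NormedAddCommGroup X] [NormedSpace ℝ X]
    (hdim : 1 < Module.rank ℝ X) (τ : ℝ) (hτ : 0 < τ) :
    Real.sqrt (1 + τ ^ 2) - 1 ≤ modSmooth X τ := by
  have h2 : (2 : ℕ) ≤ Module.rank ℝ X := by
    have := Cardinal.natCast_add_one_le_iff.2 (Nat.cast_one (R := Cardinal) ▸ hdim)
    exact_mod_cast this
  obtain ⟨v, hv⟩ := Module.le_rank_iff.1 h2
  let P := Submodule.span ℝ (range v)
  have hP : Module.finrank ℝ P = 2 := by simpa using finrank_span_eq_card hv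
  have : FiniteDimensional ℝ P := Module.finite_of_finrank_pos (by omega)
  have hF : Module.finrank ℝ (StrongDual ℝ P) = 2 := by
    rw [← hP, ← Subspace.dual_finrank_eq (K := ℝ) (V := P)]
    exact (LinearMap.toContinuousLinearMap (𝕜 := ℝ) (E := P) (F' := ℝ)).symm.finrank_eq
  have : Nontrivial P := Module.nontrivial_of_finrank_pos (R := ℝ) (by omega)
  obtain ⟨e, he⟩ := exists_norm_eq P zero_le_one
  -- The supremum is over a bounded set, so `sSup` is not a junk value.
  have hbdd : BddAbove {r : ℝ | ∃ x y : X, ‖x‖ = ‖y‖ ∧ ‖y‖ ≤ 1 ∧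
      r = (‖x + τ • y‖ + ‖x - τ • y‖) / 2 - 1} := by
    refine ⟨τ, ?_⟩
    rintro r ⟨x, y, hxy, hy, rfl⟩
    have a := norm_add_le x (τ • y)
    have b := norm_sub_le x (τ • y)
    rw [norm_smul, Real.norm_of_nonneg hτ.le] at a b
    nlinarith
  have hH : ∀ x y : P, ‖x‖ = 1 → ‖y‖ = 1 →
      ‖x + τ • y‖ + ‖x - τ • y‖ ≤ 2 * (modSmooth X τ + 1) := by
    intro x y hx hy
    have : (‖(x : X) + τ • (y : X)‖ + ‖(x : X) - τ • (y : X)‖) / 2 - 1 ≤ modSmooth X τ :=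
      le_csSup hbdd ⟨x, y, hx.trans hy.symm, hy.le, rfl⟩
    have a : ‖x + τ • y‖ = ‖(x : X) + τ • (y : X)‖ := rfl
    have b : ‖x - τ • y‖ = ‖(x : X) - τ • (y : X)‖ := rfl
    rw [a, b]
    linarith
  have := two_mul_sqrt_le hF hτ (dual_bound hτ hH e he)
  linarith
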